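/- Let r > 3 and q ≥ 2 be integers. Then the 2q sets F^r_1,…,F^r_q, G^r_1,…,G^r_q are pairwise distinct and none of them is contained in another; consequently they are precisely the facets of the simplicial complex L^r_q. -/

import Mathlib

/-!
STATEMENT 2: Let r > 3 and q ≥ 2 be integers. Then the 2q sets F^r_1,…,F^r_q, G^r_1,…,G^r_q
are pairwise distinct and none of them is contained in another; consequently they are
precisely the facets of the simplicial complex L^r_q.
-/

open Finset

/-- `F` is a facet (maximal face) of the complex with face set `K`. -/
def IsFacet {V : Type*} (K : Set (Finset V)) (F : Finset V) : Prop :=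
  F ∈ K ∧ ∀ G ∈ K, F ⊆ G → F = G

/-- `N^r_q`: exponent vectors in `ℕ^q` whose coordinates sum to `r`. -/
def Nrq (r q : ℕ) : Set (Fin q → ℕ) :=
  {a | ∑ k, a k = r}

/-- The set `F^r_i`, with `s = ⌈r/2⌉ = (r+1)/2`. -/
def Fset (r q : ℕ) (i : Fin q) : Set (Fin q → ℕ) :=
  {a | (∑ k, a k = r) ∧ a i ≤ max (r - 1) ((r + 1) / 2) ∧
    ∀ j, j ≠ i → a j ≤ (r + 1) / 2}

/-- The set `G^r_i`. -/
def Gset (r q : ℕ) (i : Fin q) : Set (Fin q → ℕ) :=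
  {a | (∑ k, a k = r) ∧ r - 1 ≤ a i}

/-- The faces of the simplicial complex `L^r_q`: all (finite) subsets of the sets
`F^r_1,…,F^r_q, G^r_1,…,G^r_q`. -/
def LFaces (r q : ℕ) : Set (Finset (Fin q → ℕ)) :=
  {σ | ∃ i : Fin q, (σ : Set (Fin q → ℕ)) ⊆ Fset r q i ∨ (σ : Set (Fin q → ℕ)) ⊆ Gset r q i}

/-- The family consisting of the `2q` sets `F^r_1,…,F^r_q, G^r_1,…,G^r_q`. -/
def FG (r q : ℕ) : Fin q ⊕ Fin q → Set (Fin q → ℕ) :=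
  Sum.elim (Fset r q) (Gset r q)

theorem sum_single_add_single {q : ℕ} (i j : Fin q) (a b : ℕ) :
    ∑ k, (Pi.single i a + Pi.single j b : Fin q → ℕ) k = a + b := by
  simp [Finset.sum_add_distrib]

theorem finite_Nrq (r q : ℕ) : (Nrq r q).Finite := by
  refine (Set.finite_Iic (fun _ : Fin q => r)).subset fun a ha k => ?_
  have ha' : ∑ k, a k = r := ha
  exact ha' ▸ Finset.single_le_sum (f := a) (fun _ _ => Nat.zero_le _) (Finset.mem_univ k)

theorem FG_subset_Nrq (r q : ℕ) (x : Fin q ⊕ Fin q) : FG r q x ⊆ Nrq r q := by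
  rcases x with i | i <;> exact fun a ha => ha.1

theorem mem_LFaces_iff {r q : ℕ} {σ : Finset (Fin q → ℕ)} :
    σ ∈ LFaces r q ↔ ∃ x, (σ : Set (Fin q → ℕ)) ⊆ FG r q x := by
  simp [LFaces, FG, Sum.exists, exists_or]

theorem Fset_subset_Fset {r q : ℕ} (hr : 4 ≤ r) {i j : Fin q}
    (h : Fset r q i ⊆ Fset r q j) : i = j := by
  by_contra hij
  have hmem : (Pi.single i (r - 1) + Pi.single j 1 : Fin q → ℕ) ∈ Fset r q i := by
    refine ⟨by rw [sum_single_add_single]; omega, by simp [hij], fun k hk => ?_⟩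
    by_cases hkj : k = j
    · subst hkj
      simp [hk]
      omega
    · simp [hk, hkj]
  have := (h hmem).2.2 i hij
  simp [hij] at this
  omega

theorem not_Fset_subset_Gset {r q : ℕ} (hr : 4 ≤ r) (hq : 2 ≤ q) (i j : Fin q) :
    ¬ Fset r q i ⊆ Gset r q j := by
  intro h
  have : Nontrivial (Fin q) := Fin.nontrivial_iff_two_le.2 hq
  obtain ⟨l, hl⟩ := exists_ne i
  have hle : ∀ k, (Pi.single i (r / 2) + Pi.single l ((r + 1) / 2) : Fin q → ℕ) k
      ≤ (r + 1) / 2 := by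
    intro k
    by_cases hki : k = i
    · subst hki
      simp [hl.symm]
      omega
    · by_cases hkl : k = l
      · subst hkl
        simp [hki]
      · simp [hki, hkl]
  have hj := (h ⟨by rw [sum_single_add_single]; omega, (hle i).trans (le_max_right _ _),
    fun k _ => hle k⟩).2
  have := hle j
  omega

theorem single_mem_Gset (r : ℕ) {q : ℕ} (i : Fin q) : Pi.single i r ∈ Gset r q i :=
  ⟨by simp, by simp⟩

theorem not_Gset_subset_Fset {r q : ℕ} (hr : 4 ≤ r) (i j : Fin q) :
    ¬ Gset r q i ⊆ Fset r q j := by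
  intro h
  obtain ⟨-, hj, hne⟩ := h (single_mem_Gset r i)
  by_cases hij : i = j
  · subst hij
    simp only [Pi.single_eq_same] at hj
    omega
  · have := hne i hij
    simp only [Pi.single_eq_same] at this
    omega

theorem Gset_subset_Gset {r q : ℕ} (hr : 4 ≤ r) {i j : Fin q}
    (h : Gset r q i ⊆ Gset r q j) : i = j := by
  by_contra hij
  have hj := (h (single_mem_Gset r i)).2
  rw [Pi.single_eq_of_ne (Ne.symm hij)] at hj
  omega

theorem FG_subset_FG {r q : ℕ} (hr : 4 ≤ r) (hq : 2 ≤ q) {x y : Fin q ⊕ Fin q}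
    (h : FG r q x ⊆ FG r q y) : x = y := by
  rcases x with i | i <;> rcases y with j | j
  · exact congrArg Sum.inl (Fset_subset_Fset hr h)
  · exact absurd h (not_Fset_subset_Gset hr hq i j)
  · exact absurd h (not_Gset_subset_Fset hr i j)
  · exact congrArg Sum.inr (Gset_subset_Gset hr h)

theorem facets_of_Lrq (r q : ℕ) (hr : 4 ≤ r) (hq : 2 ≤ q) :
    (∀ x y : Fin q ⊕ Fin q, FG r q x ⊆ FG r q y → x = y) ∧
    (∀ σ : Finset (Fin q → ℕ),
      IsFacet (LFaces r q) σ ↔ ∃ x : Fin q ⊕ Fin q, (σ : Set (Fin q → ℕ)) = FG r q x) := by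
  refine ⟨fun _ _ h => FG_subset_FG hr hq h, fun σ => ⟨?_, ?_⟩⟩
  · rintro ⟨hσ, hmax⟩
    obtain ⟨x, hx⟩ := mem_LFaces_iff.1 hσ
    have hfin : (FG r q x).Finite := (finite_Nrq r q).subset (FG_subset_Nrq r q x)
    have heq := hmax hfin.toFinset (mem_LFaces_iff.2 ⟨x, hfin.coe_toFinset.subset⟩)
      (hfin.subset_toFinset.2 hx)
    exact ⟨x, by rw [heq, hfin.coe_toFinset]⟩
  · rintro ⟨x, hx⟩
    refine ⟨mem_LFaces_iff.2 ⟨x, hx.subset⟩, fun τ hτ hστ => hστ.antisymm ?_⟩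
    obtain ⟨y, hy⟩ := mem_LFaces_iff.1 hτ
    have hxy : x = y := FG_subset_FG hr hq
      (hx ▸ (Finset.coe_subset.2 hστ).trans hy)
    subst hxy
    exact Finset.coe_subset.1 (hx ▸ hy)
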